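/- For the alternative degree ν₀ = (1,5): the ℚ-vector space of 4-tuples (g₁,g₂,g₃,g₄) of polynomials in S = ℚ[s,u,t,v], each bihomogeneous of bidegree (1,5), with g₁f₁ + g₂f₂ + g₃f₃ + g₄f₄ = 0, has dimension 12 over ℚ; moreover every Koszul 2-cycle for (f₁,f₂,f₃,f₄) whose six components are bihomogeneous of bidegree (1,5) is zero, and every Koszul 3-cycle whose four components are bihomogeneous of bidegree (1,5) is zero. -/

import Mathlib

/-!
The three parts follow from one fact: there is no nonzero syzygy `p f₁ + q f₂ + r f₃ = 0` with
`p, q, r` of bidegree `(1,5)` (`eq_zero_of_syz`). Both the space of such triples and the space of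
forms of bidegree `(3,8)` have dimension `36 = 3 · (2 · 6) = 4 · 9`, and the fact says that the
square matrix of the multiplication map is nonsingular. The linear system is made explicit by the
Kronecker substitution `s ↦ X⁹, u ↦ 1, t ↦ X, v ↦ 1` (`kron`), which turns forms into polynomials in
one variable without merging monomials of bidegree `(3,8)`; the 36 scalar equations are then solved
by linear arithmetic.

For the dimension, the fact shows that `(g₁,g₂,g₃,g₄) ↦ ∑ gᵢ fᵢ` is onto the forms of bidegree
`(3,8)` already on the tuples with `g₄ = 0` (`syzBihom_surjective`), so its kernel has dimension
`4 · 12 - 36 = 12`. For the Koszul cycles, the equations not involving `f₄` have all their unknowns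
vanish, and after substitution every remaining unknown satisfies such an equation.
-/

open MvPolynomial

/-- The polynomial ring `S = ℚ[s,u,t,v]`, with `X 0 = s`, `X 1 = u`, `X 2 = t`, `X 3 = v`. -/
noncomputable abbrev S : Type := MvPolynomial (Fin 4) ℚ

noncomputable def s : S := X 0
noncomputable def u : S := X 1
noncomputable def t : S := X 2
noncomputable def v : S := X 3

/-- `f₁`, of bidegree `(2,3)`. -/
noncomputable def f1 : S :=
  s^2*t^3 + 2*s*u*t^3 + 3*u^2*t^3 + 4*s^2*t^2*v + 5*s*u*t^2*v + 6*u^2*t^2*v +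
    7*s^2*t*v^2 + 8*s*u*t*v^2 + 9*u^2*t*v^2 + 10*s^2*v^3 + s*u*v^3 + 2*u^2*v^3

/-- `f₂`, of bidegree `(2,3)`. -/
noncomputable def f2 : S :=
  2*s^2*t^3 - 3*s^2*t^2*v + s*u*t^2*v - 3*u^2*t^2*v - s^2*t*v^2 + 3*s*u*t*v^2 +
    2*u^2*t*v^2 - u^2*v^3

/-- `f₃`, of bidegree `(2,3)`. -/
noncomputable def f3 : S :=
  2*s^2*t^3 - 2*s*u*t^3 - 3*s^2*t^2*v + 5*s*u*t^2*v - 3*u^2*t^2*v + s^2*t*v^2 -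
    3*s*u*t*v^2 + 4*u^2*t*v^2 - u^2*v^3

/-- `f₄`, of bidegree `(2,3)`. -/
noncomputable def f4 : S :=
  -2*s*u*t^3 + 3*s^2*t^2*v + s*u*t^2*v - u^2*t^2*v - s^2*t*v^2 - 3*s*u*t*v^2 +
    4*u^2*t*v^2 - u^2*v^3

/-- The weight giving the degree in the variables `s, u`. -/
def wSU : Fin 4 → ℕ := ![1, 1, 0, 0]

/-- The weight giving the degree in the variables `t, v`. -/
def wTV : Fin 4 → ℕ := ![0, 0, 1, 1]

/-- A polynomial of `S = ℚ[s,u,t,v]` is bihomogeneous of bidegree `(a,b)` if it is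
homogeneous of degree `a` in `s, u` and homogeneous of degree `b` in `t, v`. -/
def IsBihom (a b : ℕ) (p : S) : Prop :=
  IsWeightedHomogeneous wSU p a ∧ IsWeightedHomogeneous wTV p b

/-- The `ℚ`-subspace of `S` of bihomogeneous polynomials of bidegree `(a,b)`
(together with `0`). -/
noncomputable def bihom (a b : ℕ) : Submodule ℚ S :=
  weightedHomogeneousSubmodule ℚ wSU a ⊓ weightedHomogeneousSubmodule ℚ wTV b

/-- The tuple `(f₁, f₂, f₃, f₄)`. -/
noncomputable def f : Fin 4 → S := ![f1, f2, f3, f4]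

/-- The `ℚ`-linear map sending `(g₁,g₂,g₃,g₄)` to `g₁f₁ + g₂f₂ + g₃f₃ + g₄f₄`. -/
noncomputable def syz : (Fin 4 → S) →ₗ[ℚ] S :=
  ∑ i : Fin 4, (LinearMap.mulRight ℚ (f i)).comp (LinearMap.proj i)

/-! ### Spaces of bihomogeneous polynomials -/

/-- The exponent vector of the monomial `s^i u^(a-i) t^j v^(b-j)`, where `x = (i, j)`. -/
noncomputable def expo (a b : ℕ) (x : Fin (a + 1) × Fin (b + 1)) : Fin 4 →₀ ℕ :=
  Finsupp.equivFunOnFinite.symm ![x.1, a - x.1, x.2, b - x.2]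

lemma expo_injective (a b : ℕ) : Function.Injective (expo a b) := by
  intro x y h
  have h0 := DFunLike.congr_fun h 0
  have h2 := DFunLike.congr_fun h 2
  simp only [expo, Finsupp.equivFunOnFinite_symm_apply_apply] at h0 h2
  exact Prod.ext (Fin.ext h0) (Fin.ext h2)

/-- A polynomial is bihomogeneous of bidegree `(a,b)` exactly when all its monomials are of the form
`s^i u^(a-i) t^j v^(b-j)`. -/
lemma bihom_eq_restrictSupport (a b : ℕ) :
    bihom a b = restrictSupport ℚ (Set.range (expo a b)) := by
  have hset : {d | Finsupp.weight wSU d = a} ∩ {d | Finsupp.weight wTV d = b} =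
      Set.range (expo a b) := by
    ext d
    simp only [Set.mem_inter_iff, Set.mem_ofPred_eq, Finsupp.weight_apply, Set.mem_range]
    rw [Finsupp.sum_fintype _ _ (by simp), Finsupp.sum_fintype _ _ (by simp)]
    simp only [Fin.sum_univ_four, wSU, wTV]
    constructor
    · rintro ⟨h1, h2⟩
      simp at h1 h2
      refine ⟨(⟨d 0, by omega⟩, ⟨d 2, by omega⟩), ?_⟩
      ext i
      fin_cases i <;> simp [expo] <;> omega
    · rintro ⟨x, rfl⟩
      have := x.1.2
      have := x.2.2
      simp [expo]
      omega
  rw [bihom, weightedHomogeneousSubmodule_eq_finsupp_supported,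
    weightedHomogeneousSubmodule_eq_finsupp_supported, ← hset]
  ext p
  simp [AddMonoidAlgebra.mem_supported, restrictSupport]

lemma finrank_bihom (a b : ℕ) : Module.finrank ℚ (bihom a b) = (a + 1) * (b + 1) := by
  rw [bihom_eq_restrictSupport, Module.finrank_eq_nat_card_basis (basisRestrictSupport ℚ _),
    Nat.card_range_of_injective (expo_injective a b)]
  simp

instance (a b : ℕ) : FiniteDimensional ℚ (bihom a b) :=
  Module.finite_of_finrank_pos (by rw [finrank_bihom]; positivity)

lemma eq_sum_of_mem_bihom {a b : ℕ} {p : S} (hp : p ∈ bihom a b) :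
    p = ∑ x, monomial (expo a b x) (coeff (expo a b x) p) := by
  classical
  rw [bihom_eq_restrictSupport] at hp
  ext d
  simp only [coeff_sum, coeff_monomial]
  by_cases hd : d ∈ Set.range (expo a b)
  · obtain ⟨y, rfl⟩ := hd
    simp [(expo_injective a b).eq_iff]
  · have h0 : coeff d p = 0 := by
      by_contra h
      exact hd (hp (mem_support_iff.mpr h))
    rw [h0, Finset.sum_eq_zero]
    intro x _
    rw [if_neg]
    rintro rfl
    exact hd ⟨x, rfl⟩

lemma mul_mem_bihom {a b c d : ℕ} {p q : S} (hp : p ∈ bihom a b) (hq : q ∈ bihom c d) :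
    p * q ∈ bihom (a + c) (b + d) :=
  ⟨IsWeightedHomogeneous.mul hp.1 hq.1, IsWeightedHomogeneous.mul hp.2 hq.2⟩

/-- The form of bidegree `(2,3)` with coefficient `M i j` at `s^(2-i) u^i t^(3-j) v^j`. -/
lemma sum_mem_bihom (M : Fin 3 → Fin 4 → ℤ) :
    ∑ i : Fin 3, ∑ j : Fin 4,
      (M i j : S) * (s ^ (2 - i : ℕ) * u ^ (i : ℕ) * (t ^ (3 - j : ℕ) * v ^ (j : ℕ))) ∈
        bihom 2 3 := by
  have hX (i : Fin 4) : (X i : S) ∈ bihom (wSU i) (wTV i) :=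
    ⟨isWeightedHomogeneous_X ℚ _ i, isWeightedHomogeneous_X ℚ _ i⟩
  have hpow {a b : ℕ} {p : S} (hp : p ∈ bihom a b) (n : ℕ) : p ^ n ∈ bihom (n * a) (n * b) :=
    ⟨IsWeightedHomogeneous.pow hp.1 n, IsWeightedHomogeneous.pow hp.2 n⟩
  refine sum_mem fun i _ => sum_mem fun j _ => ?_
  rw [← zsmul_eq_mul]
  refine zsmul_mem ?_ _
  have h := mul_mem_bihom (mul_mem_bihom (hpow (hX 0) (2 - i)) (hpow (hX 1) i))
    (mul_mem_bihom (hpow (hX 2) (3 - j)) (hpow (hX 3) j))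
  have hi := i.2
  have hj := j.2
  refine (congrArg₂ bihom ?_ ?_).le h <;> simp [wSU, wTV] <;> omega

lemma f_mem_bihom (i : Fin 4) : f i ∈ bihom 2 3 := by
  have h1 := sum_mem_bihom ![![1, 4, 7, 10], ![2, 5, 8, 1], ![3, 6, 9, 2]]
  have h2 := sum_mem_bihom ![![2, -3, -1, 0], ![0, 1, 3, 0], ![0, -3, 2, -1]]
  have h3 := sum_mem_bihom ![![2, -3, 1, 0], ![-2, 5, -3, 0], ![0, -3, 4, -1]]
  have h4 := sum_mem_bihom ![![0, 3, -1, 0], ![-2, 1, -3, 0], ![0, -1, 4, -1]]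
  fin_cases i
  · convert h1 using 1
    simp [f, f1, Fin.sum_univ_succ]
    ring
  · convert h2 using 1
    simp [f, f2, Fin.sum_univ_succ]
    ring
  · convert h3 using 1
    simp [f, f3, Fin.sum_univ_succ]
    ring
  · convert h4 using 1
    simp [f, f4, Fin.sum_univ_succ]
    ring

/-! ### Syzygies of `f₁, f₂, f₃` in bidegree `(1,5)` -/

/-- The Kronecker substitution `s ↦ X⁹, u ↦ 1, t ↦ X, v ↦ 1`. It sends `s^i u^(3-i) t^j v^(8-j)` to
`X^(9i+j)`, so it is injective on polynomials of bidegree `(3,8)`; likewise it sends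
`s^i u^(1-i) t^j v^(5-j)` to `X^(9i+j)`. -/
noncomputable def kron : S →ₐ[ℚ] Polynomial ℚ :=
  aeval ![Polynomial.X ^ 9, 1, Polynomial.X, 1]

lemma kron_eq_sum {p : S} (hp : p ∈ bihom 1 5) :
    kron p = ∑ x : Fin 2 × Fin 6,
      Polynomial.C (coeff (expo 1 5 x) p) * Polynomial.X ^ (9 * x.1 + x.2 : ℕ) := by
  conv_lhs => rw [eq_sum_of_mem_bihom hp]
  rw [map_sum]
  refine Finset.sum_congr rfl fun x _ => ?_
  rw [kron, aeval_monomial, Finsupp.prod_fintype _ _ (by simp)]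
  simp [Fin.prod_univ_four, expo, pow_add, pow_mul]

lemma coeff_kron {p : S} (hp : p ∈ bihom 1 5) (n : ℕ) :
    (kron p).coeff n =
      ∑ x : Fin 2 × Fin 6, if n = 9 * x.1 + x.2 then coeff (expo 1 5 x) p else 0 := by
  simp [kron_eq_sum hp]

/-- The image of a form of bidegree `(1,5)` involves only the exponents `9i+j` with `i ≤ 1` and
`j ≤ 5`. -/
lemma coeff_kron_eq_zero {p : S} (hp : p ∈ bihom 1 5) {n : ℕ} (hn : 6 ≤ n % 9 ∨ 15 ≤ n) :
    (kron p).coeff n = 0 := by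
  rw [coeff_kron hp]
  refine Finset.sum_eq_zero fun x _ => if_neg ?_
  have := x.1.2
  have := x.2.2
  omega

lemma eq_zero_of_kron {p : S} (hp : p ∈ bihom 1 5)
    (h : ∀ n < 15, n % 9 < 6 → (kron p).coeff n = 0) : p = 0 := by
  rw [eq_sum_of_mem_bihom hp]
  refine Finset.sum_eq_zero fun x _ => ?_
  have hx := h (9 * x.1 + x.2) (by omega) (by omega)
  rw [coeff_kron hp, Finset.sum_eq_single x] at hx
  · simpa using hx
  · intro y _ hy
    refine if_neg fun hxy => hy ?_
    exact Prod.ext (Fin.ext (by omega)) (Fin.ext (by omega))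
  · simp

local notation "mon" => Polynomial.monomial (R := ℚ)

lemma kron_f :
    kron f1 = mon 21 1 + mon 12 2 + mon 3 3 + mon 20 4 + mon 11 5
      + mon 2 6 + mon 19 7 + mon 10 8 + mon 1 9 + mon 18 10 + mon 9 1
      + mon 0 2 ∧
    kron f2 = mon 21 2 + mon 20 (-3) + mon 11 1 + mon 2 (-3) + mon 19 (-1)
      + mon 10 3 + mon 1 2 + mon 0 (-1) ∧
    kron f3 = mon 21 2 + mon 12 (-2) + mon 20 (-3) + mon 11 5 + mon 2 (-3)
      + mon 19 1 + mon 10 (-3) + mon 1 4 + mon 0 (-1) := by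
  simp only [← Polynomial.C_mul_X_pow_eq_monomial]
  refine ⟨?_, ?_, ?_⟩ <;> simp [kron, f1, f2, f3, s, u, t, v, map_ofNat Polynomial.C] <;> ring

lemma coeff_mul_mon (P : Polynomial ℚ) (k n : ℕ) (c : ℚ) :
    (P * mon k c).coeff n = if k ≤ n then P.coeff (n - k) * c else 0 := by
  rw [← Polynomial.C_mul_X_pow_eq_monomial, ← mul_assoc, Polynomial.coeff_mul_X_pow']
  simp

set_option maxHeartbeats 4000000 in
/-- The matrix of `(p, q, r) ↦ p f₁ + q f₂ + r f₃` from bidegree `(1,5)` to bidegree `(3,8)`, a square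
matrix of size `36`, is nonsingular. -/
lemma eq_zero_of_syz {p q r : S} (hp : p ∈ bihom 1 5) (hq : q ∈ bihom 1 5) (hr : r ∈ bihom 1 5)
    (h : p * f1 + q * f2 + r * f3 = 0) : p = 0 ∧ q = 0 ∧ r = 0 := by
  have key : ∀ n, (kron p * kron f1 + kron q * kron f2 + kron r * kron f3).coeff n = 0 := by
    intro n
    rw [← map_mul, ← map_mul, ← map_mul, ← map_add, ← map_add, h, map_zero, Polynomial.coeff_zero]
  rw [kron_f.1, kron_f.2.1, kron_f.2.2] at key
  simp only [mul_add, Polynomial.coeff_add, coeff_mul_mon] at key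
  have hp0 := fun n => coeff_kron_eq_zero hp (n := n)
  have hq0 := fun n => coeff_kron_eq_zero hq (n := n)
  have hr0 := fun n => coeff_kron_eq_zero hr (n := n)
  suffices ∀ n < 15, n % 9 < 6 →
      (kron p).coeff n = 0 ∧ (kron q).coeff n = 0 ∧ (kron r).coeff n = 0 from
    ⟨eq_zero_of_kron hp fun n h1 h2 => (this n h1 h2).1,
      eq_zero_of_kron hq fun n h1 h2 => (this n h1 h2).2.1,
      eq_zero_of_kron hr fun n h1 h2 => (this n h1 h2).2.2⟩
  generalize (kron p).coeff = a at *
  generalize (kron q).coeff = b at *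
  generalize (kron r).coeff = c at *
  -- The 36 coefficients of `p f₁ + q f₂ + r f₃` sit at the exponents `9i+j` with `i ≤ 3`, `j ≤ 8`,
  -- that is, at `0, …, 35`.
  have e0 := key 0
  have e1 := key 1
  have e2 := key 2
  have e3 := key 3
  have e4 := key 4
  have e5 := key 5
  have e6 := key 6
  have e7 := key 7
  have e8 := key 8
  have e9 := key 9
  have e10 := key 10
  have e11 := key 11
  have e12 := key 12
  have e13 := key 13
  have e14 := key 14
  have e15 := key 15
  have e16 := key 16
  have e17 := key 17
  have e18 := key 18
  have e19 := key 19
  have e20 := key 20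
  have e21 := key 21
  have e22 := key 22
  have e23 := key 23
  have e24 := key 24
  have e25 := key 25
  have e26 := key 26
  have e27 := key 27
  have e28 := key 28
  have e29 := key 29
  have e30 := key 30
  have e31 := key 31
  have e32 := key 32
  have e33 := key 33
  have e34 := key 34
  have e35 := key 35
  norm_num [hp0, hq0, hr0] at e0 e1 e2 e3 e4 e5 e6 e7 e8 e9 e10 e11 e12 e13 e14 e15 e16 e17
  norm_num [hp0, hq0, hr0] at e18 e19 e20 e21 e22 e23 e24 e25 e26 e27 e28 e29 e30 e31 e32 e33 e34 e35
  clear key hp0 hq0 hr0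
  intro n hn hn'
  interval_cases n <;> first | omega | skip
  clear h hp hq hr
  all_goals refine ⟨?_, ?_, ?_⟩ <;> grind

/-! ### The dimension of the syzygy space -/

/-- The multiplication map `(p₀,p₁,p₂,p₃) ↦ ∑ pᵢ fᵢ` from bidegree `(1,5)` to bidegree `(3,8)`. -/
noncomputable def syzBihom : (Fin 4 → bihom 1 5) →ₗ[ℚ] bihom 3 8 :=
  (syz.comp (LinearMap.compLeft (bihom 1 5).subtype (Fin 4))).codRestrict (bihom 3 8) fun g => by
    simp only [syz, LinearMap.comp_apply, LinearMap.sum_apply]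
    exact sum_mem fun i _ => mul_mem_bihom (g i).2 (f_mem_bihom i)

lemma coe_syzBihom (g : Fin 4 → bihom 1 5) :
    (syzBihom g : S) = g 0 * f1 + g 1 * f2 + g 2 * f3 + g 3 * f4 := by
  simp [syzBihom, syz, Fin.sum_univ_four, f]

/-- Already the multiples of `f₁, f₂, f₃` fill bidegree `(3,8)`: they form an injective image of a
space of dimension `3 · 12 = 36`, which is the dimension of `bihom 3 8`. -/
lemma syzBihom_surjective : Function.Surjective syzBihom := by
  let ι : (Fin 3 → bihom 1 5) →ₗ[ℚ] (Fin 4 → bihom 1 5) :=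
    LinearMap.pi ![LinearMap.proj 0, LinearMap.proj 1, LinearMap.proj 2, 0]
  have hinj : Function.Injective (syzBihom ∘ₗ ι) := by
    rw [injective_iff_map_eq_zero]
    intro g hg
    have h := congrArg (Subtype.val) hg
    rw [LinearMap.comp_apply, coe_syzBihom] at h
    simp [ι] at h
    obtain ⟨h0, h1, h2⟩ := eq_zero_of_syz (g 0).2 (g 1).2 (g 2).2 h
    ext1 i
    fin_cases i
    · exact Subtype.ext h0
    · exact Subtype.ext h1
    · exact Subtype.ext h2
  have hrank : Module.finrank ℚ (Fin 3 → bihom 1 5) = Module.finrank ℚ (bihom 3 8) := by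
    rw [Module.finrank_pi_fintype]
    simp [finrank_bihom]
  have hsurj := (LinearMap.injective_iff_surjective_of_finrank_eq_finrank hrank).mp hinj
  exact Function.Surjective.of_comp hsurj

lemma finrank_ker_syzBihom : Module.finrank ℚ (LinearMap.ker syzBihom) = 12 := by
  have h := LinearMap.finrank_range_add_finrank_ker syzBihom
  rw [LinearMap.range_eq_top.mpr syzBihom_surjective, finrank_top, Module.finrank_pi_fintype] at h
  simp [finrank_bihom] at h
  omega

lemma syz_eq_map_ker :
    (⨅ i : Fin 4, (bihom 1 5).comap (LinearMap.proj (R := ℚ) i)) ⊓ LinearMap.ker syz =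
      (LinearMap.ker syzBihom).map (LinearMap.compLeft (bihom 1 5).subtype (Fin 4)) := by
  ext g
  simp only [Submodule.mem_inf, Submodule.mem_iInf, Submodule.mem_comap, LinearMap.proj_apply,
    LinearMap.mem_ker, Submodule.mem_map]
  constructor
  · rintro ⟨hg, h⟩
    exact ⟨fun i => ⟨g i, hg i⟩, Subtype.ext h, rfl⟩
  · rintro ⟨g, h, rfl⟩
    exact ⟨fun i => (g i).2, congrArg Subtype.val h⟩

/-- For the alternative degree `ν₀ = (1,5)`: the `ℚ`-vector space of syzygies
`(g₁,g₂,g₃,g₄)` of bidegree `(1,5)` has dimension `12`; moreover every Koszul 2-cycle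
for `(f₁,f₂,f₃,f₄)` whose six components are bihomogeneous of bidegree `(1,5)` is zero,
and every Koszul 3-cycle whose four components are bihomogeneous of bidegree `(1,5)`
is zero. -/
theorem alternative_degree_one_five :
    (Module.finrank ℚ
        ↥((⨅ i : Fin 4, (bihom 1 5).comap (LinearMap.proj (R := ℚ) i)) ⊓ LinearMap.ker syz) =
        12) ∧
    (∀ h12 h13 h14 h23 h24 h34 : S,
      IsBihom 1 5 h12 → IsBihom 1 5 h13 → IsBihom 1 5 h14 →
      IsBihom 1 5 h23 → IsBihom 1 5 h24 → IsBihom 1 5 h34 →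
      -(h12 * f2) - h13 * f3 - h14 * f4 = 0 →
      h12 * f1 - h23 * f3 - h24 * f4 = 0 →
      h13 * f1 + h23 * f2 - h34 * f4 = 0 →
      h14 * f1 + h24 * f2 + h34 * f3 = 0 →
      h12 = 0 ∧ h13 = 0 ∧ h14 = 0 ∧ h23 = 0 ∧ h24 = 0 ∧ h34 = 0) ∧
    (∀ h123 h124 h134 h234 : S,
      IsBihom 1 5 h123 → IsBihom 1 5 h124 → IsBihom 1 5 h134 → IsBihom 1 5 h234 →
      h123 * f3 + h124 * f4 = 0 →
      -(h123 * f2) + h134 * f4 = 0 →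
      -(h124 * f2) - h134 * f3 = 0 →
      h123 * f1 + h234 * f4 = 0 →
      h124 * f1 - h234 * f3 = 0 →
      h134 * f1 + h234 * f2 = 0 →
      h123 = 0 ∧ h124 = 0 ∧ h134 = 0 ∧ h234 = 0) := by
  refine ⟨?_, ?_, ?_⟩
  · have hinj : Function.Injective (LinearMap.compLeft (bihom 1 5).subtype (Fin 4)) :=
      fun _ _ h => funext fun i => Subtype.ext (congrFun h i)
    rw [syz_eq_map_ker, (Submodule.equivMapOfInjective _ hinj _).symm.finrank_eq,
      finrank_ker_syzBihom]
  · intro h12 h13 h14 h23 h24 h34 m12 m13 m14 m23 m24 m34 _ e2 e3 e4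
    -- The last equation kills the three components that involve `e₄`; each of the remaining
    -- components then satisfies a relation among `f₁, f₂, f₃` alone.
    obtain ⟨rfl, rfl, rfl⟩ := eq_zero_of_syz m14 m24 m34 e4
    obtain ⟨rfl, -, h⟩ := eq_zero_of_syz m12 (zero_mem _) (neg_mem (S := Submodule ℚ S) m23)
      (by linear_combination e2)
    obtain rfl := neg_eq_zero.mp h
    obtain ⟨rfl, -, -⟩ := eq_zero_of_syz m13 (zero_mem _) (zero_mem _) (by linear_combination e3)
    simp
  · intro h123 h124 h134 h234 m123 m124 m134 m234 _ _ _ e4 e5 e6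
    obtain ⟨rfl, rfl, -⟩ := eq_zero_of_syz m134 m234 (zero_mem _) (by linear_combination e6)
    obtain ⟨rfl, -, -⟩ := eq_zero_of_syz m123 (zero_mem _) (zero_mem _) (by linear_combination e4)
    obtain ⟨rfl, -, -⟩ := eq_zero_of_syz m124 (zero_mem _) (zero_mem _) (by linear_combination e5)
    simp
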